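/- arXiv:1409.2333 — 2 statements merged into one kernel-verified Lean document; each statement's English description precedes it below -/
import Mathlib

section
/- Let n be an odd positive integer and θ ∈ (0,π/4]. Let t_{n−1,1} be the smallest zero of H_{n−1}, and let t^θ_{n−1,n} be the unique point in (t_{n,n}, ∞) such that tan θ · H_n(t^θ_{n−1,n}) = H_n(t_{n−1,1}). Then: (1) for every t ≥ t_{n,n}, the function x ↦ Φ^θ_n(x,t) has exactly one zero in the interval (−∞, t_{n,1}]; (2) for every t > t^θ_{n−1,n}, the function x ↦ Φ^θ_n(x,t) has exactly one zero in ℝ. -/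
/-- The physicist's Hermite polynomials: `H 0 = 1`, `H 1 = 2X`,
`H (n+2) = 2X · H (n+1) - 2(n+1) · H n`. -/
noncomputable def H : ℕ → Polynomial ℝ
  | 0 => 1
  | 1 => Polynomial.C 2 * Polynomial.X
  | n + 2 => Polynomial.C 2 * Polynomial.X * H (n + 1) - Polynomial.C (2 * (n + 1) : ℝ) * H n

/-- The eigenfunction `Φ^θ_n(x,y) = (cos θ · H_n(x) + sin θ · H_n(y)) e^{-(x²+y²)/2}`. -/
noncomputable def Phi (n : ℕ) (θ : ℝ) : ℝ × ℝ → ℝ := fun p =>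
  (Real.cos θ * (H n).eval p.1 + Real.sin θ * (H n).eval p.2) *
    Real.exp (-(p.1 ^ 2 + p.2 ^ 2) / 2)

/-- The nodal set of `Φ^θ_n`. -/
noncomputable def nodalSet (n : ℕ) (θ : ℝ) : Set (ℝ × ℝ) := {p | Phi n θ p = 0}

/-- The number of nodal domains: the number of connected components of the
complement of the nodal set. -/
noncomputable def numNodalDomains (n : ℕ) (θ : ℝ) : ℕ :=
  {C : Set (ℝ × ℝ) | ∃ p, Phi n θ p ≠ 0 ∧
    C = connectedComponentIn {q : ℝ × ℝ | Phi n θ q ≠ 0} p}.ncard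

theorem H_rec (m : ℕ) (x : ℝ) :
    (H (m+2)).eval x = 2 * x * (H (m+1)).eval x - 2 * (m+1) * (H m).eval x := by
  simp [H]

theorem H_deriv (m : ℕ) :
    Polynomial.derivative (H (m+1)) = Polynomial.C (2 * (m+1) : ℝ) * H m ∧
    Polynomial.derivative (H m) = Polynomial.C 2 * Polynomial.X * H m - H (m+1) := by
  induction m with
  | zero => simp [H]
  | succ k ih =>
    obtain ⟨h1, h2⟩ := ih
    have e : H (k+2) = Polynomial.C 2 * Polynomial.X * H (k + 1)
      - Polynomial.C (2 * (k + 1) : ℝ) * H k := by simp [H]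
    have h3 : Polynomial.derivative (H (k+1))
        = Polynomial.C 2 * Polynomial.X * H (k+1) - H (k+2) := by
      rw [h1, e]; ring
    refine ⟨?_, h3⟩
    rw [show k + 1 + 1 = k + 2 from rfl, e]
    simp only [Polynomial.derivative_sub, Polynomial.derivative_mul, Polynomial.derivative_C,
      Polynomial.derivative_X]
    rw [h2, h1]
    push_cast
    simp only [map_mul, map_add, Polynomial.C_1]
    ring

theorem H_parity (x : ℝ) (m : ℕ) :
    (H m).eval (-x) = (-1)^m * (H m).eval x ∧
    (H (m+1)).eval (-x) = (-1)^(m+1) * (H (m+1)).eval x := by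
  induction m with
  | zero => simp [H]
  | succ k ih =>
    refine ⟨ih.2, ?_⟩
    rw [show k + 1 + 1 = k + 2 from rfl, H_rec, H_rec, ih.1, ih.2]
    ring

theorem H_deg (m : ℕ) :
    ((H m).natDegree = m ∧ (H m).leadingCoeff = 2^m) ∧
    ((H (m+1)).natDegree = m+1 ∧ (H (m+1)).leadingCoeff = 2^(m+1)) := by
  induction m with
  | zero => simp [H]
  | succ k ih =>
    refine ⟨ih.2, ?_⟩
    obtain ⟨⟨a1, a2⟩, b1, b2⟩ := ih
    have e : H (k+1+1) = Polynomial.C 2 * (Polynomial.X * H (k + 1))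
      - Polynomial.C (2 * (k + 1) : ℝ) * H k := by simp [H, mul_assoc]
    have hc : (H (k+1+1)).coeff (k+1+1) = 2^(k+1+1) := by
      rw [e, Polynomial.coeff_sub, Polynomial.coeff_C_mul, Polynomial.coeff_C_mul,
        Polynomial.coeff_X_mul, Polynomial.coeff_eq_zero_of_natDegree_lt (p := H k) (by omega)]
      rw [Polynomial.leadingCoeff, b1] at b2
      rw [b2]; ring
    have hd : (H (k+1+1)).natDegree ≤ k+1+1 := by
      rw [e]
      refine (Polynomial.natDegree_sub_le _ _).trans (max_le ?_ ?_)
      · refine (Polynomial.natDegree_C_mul_le _ _).trans ?_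
        refine Polynomial.natDegree_mul_le.trans ?_
        rw [Polynomial.natDegree_X]; omega
      · refine (Polynomial.natDegree_C_mul_le _ _).trans (by omega)
    have hd' : (H (k+1+1)).natDegree = k+1+1 :=
      le_antisymm hd (Polynomial.le_natDegree_of_ne_zero (by rw [hc]; positivity))
    exact ⟨hd', by rw [Polynomial.leadingCoeff, hd', hc]⟩

theorem H_tendsto (m : ℕ) :
    Filter.Tendsto (fun x => (H (m+1)).eval x) Filter.atTop Filter.atTop := by
  have h := (H_deg m).2
  apply Polynomial.tendsto_atTop_of_leadingCoeff_nonneg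
  · rw [← Polynomial.natDegree_pos_iff_degree_pos, h.1]; omega
  · rw [h.2]; positivity

theorem H_pos (m : ℕ) (a : ℝ) (ha : ∀ x, a < x → (H (m+1)).eval x ≠ 0) (x : ℝ) (hx : a < x) :
    0 < (H (m+1)).eval x := by
  by_contra hneg
  push Not at hneg
  obtain ⟨y, hy1, hy2⟩ := (((H_tendsto m).eventually_gt_atTop 0).and
    (Filter.eventually_ge_atTop x)).exists
  obtain ⟨z, hz, hz0⟩ := intermediate_value_Icc hy2
    ((H (m+1)).continuous.continuousOn) ⟨hneg, hy1.le⟩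
  exact ha z (lt_of_lt_of_le hx hz.1) hz0

theorem H_hasDeriv (m : ℕ) (x : ℝ) :
    HasDerivAt (fun x => (H (m+1)).eval x) (2 * (m+1) * (H m).eval x) x := by
  have := (H (m+1)).hasDerivAt x
  rw [(H_deriv m).1] at this
  simpa using this

theorem H_hasDeriv' (m : ℕ) (x : ℝ) :
    HasDerivAt (fun x => (H m).eval x) (2 * x * (H m).eval x - (H (m+1)).eval x) x := by
  have := (H m).hasDerivAt x
  rw [(H_deriv m).2] at this
  simpa using this

theorem H_sonin (m : ℕ) : AntitoneOn
    (fun x => (H (m+1)).eval x ^ 2 + 2 * (m+1) * (H m).eval x ^ 2) (Set.Iic 0) := by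
  have hd : ∀ x, HasDerivAt (fun x => (H (m+1)).eval x ^ 2 + 2 * (m+1) * (H m).eval x ^ 2)
      (8 * (m+1) * x * (H m).eval x ^ 2) x := by
    intro x
    have := ((H_hasDeriv m x).pow 2).add (((H_hasDeriv' m x).pow 2).const_mul (2 * ((m:ℝ)+1)))
    refine this.congr_deriv ?_
    push_cast; ring
  apply antitoneOn_of_deriv_nonpos (convex_Iic 0)
  · exact fun x _ => (hd x).continuousAt.continuousWithinAt
  · exact fun x _ => (hd x).differentiableAt.differentiableWithinAt
  · intro x hx
    rw [interior_Iic] at hx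
    rw [(hd x).deriv]
    have : x < 0 := hx
    have h2 : 0 ≤ 8 * ((m:ℝ)+1) * (H m).eval x ^ 2 := by positivity
    nlinarith

theorem core (k : ℕ) (hk : Even k) (a b c θ T : ℝ) (hθ : 0 < θ) (hθ' : θ < Real.pi / 2)
    (hb : ∀ x, x < b → (H (k+2+1)).eval x ≠ 0) (hb0 : (H (k+2+1)).eval b = 0)
    (hc : ∀ x, c < x → (H (k+2+1)).eval x ≠ 0) (hc0 : (H (k+2+1)).eval c = 0)
    (ha : ∀ x, x < a → (H (k+2)).eval x ≠ 0) (ha0 : (H (k+2)).eval a = 0)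
    (hT : c < T) (hTeq : Real.tan θ * (H (k+2+1)).eval T = (H (k+2+1)).eval a) :
    (∀ s : ℝ, c ≤ s → ∃! x : ℝ, x ∈ Set.Iic b ∧ Phi (k+2+1) θ (x, s) = 0) ∧
    (∀ s : ℝ, T < s → ∃! x : ℝ, Phi (k+2+1) θ (x, s) = 0) := by
  have htan : 0 < Real.tan θ := Real.tan_pos_of_pos_of_lt_pi_div_two hθ hθ'
  have hcos : 0 < Real.cos θ := Real.cos_pos_of_mem_Ioo ⟨by linarith, hθ'⟩
  have hPhi : ∀ x s, Phi (k+2+1) θ (x, s) = 0 ↔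
      (H (k+2+1)).eval x = - (Real.tan θ * (H (k+2+1)).eval s) := by
    intro x s
    have hs : Real.sin θ = Real.tan θ * Real.cos θ := (Real.tan_mul_cos hcos.ne').symm
    simp only [Phi, mul_eq_zero, Real.exp_ne_zero, or_false]
    rw [hs, show Real.cos θ * (H (k+2+1)).eval x + Real.tan θ * Real.cos θ * (H (k+2+1)).eval s
      = Real.cos θ * ((H (k+2+1)).eval x + Real.tan θ * (H (k+2+1)).eval s) by ring]
    rw [mul_eq_zero, or_iff_right hcos.ne']
    constructor <;> intro h <;> linarith
  have hodd : ∀ x, (H (k+2+1)).eval (-x) = - (H (k+2+1)).eval x := by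
    intro x
    rw [(H_parity x (k+2+1)).1, Odd.neg_one_pow (by grind)]; ring
  have heven : ∀ x, (H (k+2)).eval (-x) = (H (k+2)).eval x := by
    intro x
    rw [(H_parity x (k+2)).1, Even.neg_one_pow (by grind)]; ring
  have hcpos : ∀ x, c < x → 0 < (H (k+2+1)).eval x := H_pos (k+2) c hc
  have hcb : -c = b := by
    apply le_antisymm
    · by_contra h
      push Not at h
      exact hc (-b) (by linarith) (by rw [hodd, hb0, neg_zero])
    · by_contra h
      push Not at h
      exact hb (-c) h (by rw [hodd, hc0, neg_zero])
  have hbneg : ∀ x, x < b → (H (k+2+1)).eval x < 0 := by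
    intro x hx
    have := hcpos (-x) (by linarith)
    rw [hodd] at this; linarith
  have hapos : 0 < (H (k+2+1)).eval a := by
    rw [← hTeq]; exact mul_pos htan (hcpos T hT)
  have hba : b ≤ a := by
    by_contra h
    push Not at h
    linarith [hbneg a h]
  have ha2 : ∀ x, x < a → 0 < (H (k+2)).eval x := by
    intro x hx
    rw [← heven]
    refine H_pos (k+1) (-a) (fun y hy => ?_) (-x) (by linarith)
    have := ha (-y) (by linarith)
    rwa [heven] at this
  have hale : a ≤ 0 := by
    by_contra h
    push Not at h
    exact ha (-a) (by linarith) (by rw [heven, ha0])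
  have hmono : StrictMonoOn (fun x => (H (k+2+1)).eval x) (Set.Iic a) := by
    apply strictMonoOn_of_deriv_pos (convex_Iic a) (H (k+2+1)).continuous.continuousOn
    intro x hx
    rw [interior_Iic] at hx
    rw [(H_hasDeriv (k+2) x).deriv]
    have := ha2 x hx
    positivity
  have hlow : ∀ x, a ≤ x → -(H (k+2+1)).eval a ≤ (H (k+2+1)).eval x := by
    intro x hx
    rcases le_or_gt x (-a) with h | h
    · have h1 := H_sonin (k+2) (show a ∈ Set.Iic (0:ℝ) from hale)
        (show -|x| ∈ Set.Iic (0:ℝ) by simp) (by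
          have := abs_le.2 ⟨by linarith, h⟩; linarith)
      simp only [ha0] at h1
      have h2 : (H (k+2+1)).eval (-|x|) ^ 2 = (H (k+2+1)).eval x ^ 2 := by
        rcases abs_choice x with h | h <;> rw [h]
        · rw [hodd]; ring
        · rw [neg_neg]
      rw [h2] at h1
      have h3 : 0 ≤ 2 * (((k+2:ℕ):ℝ)+1) * (H (k+2)).eval (-|x|) ^ 2 := by positivity
      exact (abs_le_of_sq_le_sq' (by nlinarith) hapos.le).1
    · have := hmono (show -x ∈ Set.Iic a by simp; linarith) (Set.mem_Iic.2 le_rfl)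
        (show -x < a by linarith)
      simp only [hodd] at this
      linarith
  have hex : ∀ v d, v ≤ (H (k+2+1)).eval d → ∃ x, x ≤ d ∧ (H (k+2+1)).eval x = v := by
    intro v d hv
    obtain ⟨y, hy1, hy2⟩ := (((H_tendsto (k+2)).eventually_ge_atTop (-v)).and
      (Filter.eventually_ge_atTop (-d))).exists
    obtain ⟨z, hz, hz0⟩ := intermediate_value_Icc (show -y ≤ d by linarith)
      ((H (k+2+1)).continuous.continuousOn) ⟨by rw [hodd]; linarith, hv⟩
    exact ⟨z, hz.2, hz0⟩
  constructor
  · intro s hs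
    have h0 : 0 ≤ (H (k+2+1)).eval s := by
      rcases hs.eq_or_lt with h | h
      · rw [← h, hc0]
      · exact (hcpos s h).le
    obtain ⟨x, hx, hxe⟩ := hex (- (Real.tan θ * (H (k+2+1)).eval s)) b (by
      rw [hb0]; have := mul_nonneg htan.le h0; linarith)
    refine ⟨x, ⟨hx, (hPhi x s).2 hxe⟩, ?_⟩
    rintro y ⟨hy, hye⟩
    rw [hPhi] at hye
    exact hmono.injOn (show y ≤ a from le_trans hy hba) (show x ≤ a from le_trans hx hba)
      (hye.trans hxe.symm)
  · intro s hs
    have hTs : (H (k+2+1)).eval T < (H (k+2+1)).eval s := by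
      have := hmono (show -s ∈ Set.Iic a by simp; linarith) (show -T ∈ Set.Iic a by simp; linarith)
        (show -s < -T by linarith)
      simp only [hodd] at this
      linarith
    have hv := mul_lt_mul_of_pos_left hTs htan
    obtain ⟨x, hx, hxe⟩ := hex (- (Real.tan θ * (H (k+2+1)).eval s)) a (by linarith)
    refine ⟨x, (hPhi x s).2 hxe, ?_⟩
    intro y hye
    rw [hPhi] at hye
    have hy : y ≤ a := by
      by_contra h
      push Not at h
      linarith [hlow y h.le]
    exact hmono.injOn hy hx (hye.trans hxe.symm)

open Real Set in
/-- **Lemma 3.3 (1)(2).** Let `n` be odd, `θ ∈ (0,π/4]`, let `t 0 < ⋯ < t (n-1)`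
enumerate the zeros of `H_n`, `t' 0 < ⋯ < t' (n-2)` those of `H_{n-1}`, and let `T`
be the unique point in `(t_{n,n}, ∞)` with `tan θ · H_n(T) = H_n(t_{n-1,1})`. Then
(1) for every `s ≥ t_{n,n}`, the function `x ↦ Φ^θ_n(x,s)` has exactly one zero in
`(-∞, t_{n,1}]`; and (2) for every `s > T`, it has exactly one zero in `ℝ`. -/
theorem barrier_horizontal_exactly_one_zero (n : ℕ) (hodd : Odd n) (hpos : 0 < n)
    (θ : ℝ) (hθ : θ ∈ Set.Ioc 0 (π / 4))
    (t : Fin n → ℝ) (htmono : StrictMono t)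
    (htzero : ∀ x : ℝ, (H n).eval x = 0 ↔ ∃ i, x = t i)
    (t' : Fin (n - 1) → ℝ) (ht'mono : StrictMono t')
    (ht'zero : ∀ x : ℝ, (H (n - 1)).eval x = 0 ↔ ∃ i, x = t' i)
    (hn1 : 0 < n - 1)
    (T : ℝ) (hTgt : t ⟨n - 1, by omega⟩ < T)
    (hTeq : Real.tan θ * (H n).eval T = (H n).eval (t' ⟨0, hn1⟩)) :
    (∀ s : ℝ, t ⟨n - 1, by omega⟩ ≤ s →
      ∃! x : ℝ, x ∈ Set.Iic (t ⟨0, hpos⟩) ∧ Phi n θ (x, s) = 0) ∧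
    (∀ s : ℝ, T < s → ∃! x : ℝ, Phi n θ (x, s) = 0) := by
  obtain ⟨k, rfl⟩ : ∃ k, n = k + 2 + 1 := ⟨n - 3, by grind⟩
  obtain ⟨h0, h1⟩ := hθ
  have hpi := Real.pi_pos
  refine core k (by grind) (t' ⟨0, hn1⟩) (t ⟨0, hpos⟩) _ θ T h0 (by linarith) ?_
    ((htzero _).2 ⟨_, rfl⟩) ?_ ((htzero _).2 ⟨_, rfl⟩) ?_ ((ht'zero _).2 ⟨_, rfl⟩) hTgt hTeq
  · intro x hx h
    obtain ⟨i, rfl⟩ := (htzero x).1 h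
    exact absurd hx (not_lt.2 (htmono.monotone (Fin.mk_le_of_le_val (Nat.zero_le _))))
  · intro x hx h
    obtain ⟨i, rfl⟩ := (htzero x).1 h
    refine absurd hx (not_lt.2 (htmono.monotone ?_))
    rw [Fin.le_def]
    have := i.2
    simp only
    omega
  · intro x hx h
    obtain ⟨i, rfl⟩ := (ht'zero x).1 h
    exact absurd hx (not_lt.2 (ht'mono.monotone (Fin.mk_le_of_le_val (Nat.zero_le _))))
end

section
/- Let n be an odd positive integer and let x, y ∈ ℝ satisfy H_n'(x) = 0, H_n'(y) = 0 and H_n(x) = H_n(y). Then x = y. In other words, all critical zeros of the function Ψ_n(x,y) = H_n(x) − H_n(y) lie on the diagonal {x = y}. -/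
open Polynomial in
lemma H_succ_succ (n : ℕ) : H (n + 2) = C 2 * X * H (n + 1) - C (2 * (n + 1) : ℝ) * H n := by
  rw [H]


open Polynomial in
lemma H_der (n : ℕ) : derivative (H (n + 1)) = C (2 * (n + 1) : ℝ) * H n := by
  induction n using Nat.strong_induction_on with
  | _ n ih =>
    match n, ih with
    | 0, _ => simp [H]
    | 1, _ =>
      simp only [H_succ_succ, H]
      simp
      simp only [map_ofNat]
      ring
    | n + 2, ih =>
      have h1 := ih (n + 1) (by omega)
      have h0 := ih n (by omega)
      rw [H_succ_succ (n + 1)]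
      simp only [derivative_sub, derivative_mul, derivative_C, derivative_X, h1, h0]
      rw [H_succ_succ n]
      simp only [map_mul, map_add, map_ofNat, map_natCast, map_one]
      push_cast
      ring


open Polynomial in
lemma H_rec_s13 (n : ℕ) : H (n + 1) = C 2 * X * H n - derivative (H n) := by
  cases n with
  | zero => simp [H]
  | succ n => rw [H_succ_succ, H_der]


open Polynomial in
lemma H_ode (n : ℕ) :
    derivative (derivative (H n)) = C 2 * X * derivative (H n) - C (2 * n : ℝ) * H n := by
  have h := congrArg derivative (H_rec_s13 n)
  rw [H_der] at h
  simp only [derivative_sub, derivative_mul, derivative_C, derivative_X] at h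
  simp only [map_mul, map_add, map_ofNat, map_natCast, map_one] at h ⊢
  linear_combination h

lemma H_ne (n : ℕ) : H n ≠ 0 := by
  induction n with
  | zero => simp [H]
  | succ n ih =>
    intro h
    have h1 := H_der n
    rw [h, Polynomial.derivative_zero] at h1
    have h2 : (2 * (n + 1) : ℝ) ≠ 0 := by positivity
    rcases mul_eq_zero.1 h1.symm with h3 | h3
    · exact h2 (Polynomial.C_eq_zero.1 h3)
    · exact ih h3

lemma H_neg (n : ℕ) (x : ℝ) : (H n).eval (-x) = (-1) ^ n * (H n).eval x := by
  induction n using Nat.strong_induction_on with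
  | _ n ih =>
    match n, ih with
    | 0, _ => simp [H]
    | 1, _ => simp [H]
    | n + 2, ih =>
      simp only [H_succ_succ, Polynomial.eval_sub, Polynomial.eval_mul, Polynomial.eval_C,
        Polynomial.eval_X, ih (n + 1) (by omega), ih n (by omega)]
      ring

theorem critical_zeros_of_Psi_on_diagonal (n : ℕ) (hodd : Odd n) (hpos : 0 < n)
    (x y : ℝ)
    (hx : (Polynomial.derivative (H n)).eval x = 0)
    (hy : (Polynomial.derivative (H n)).eval y = 0)
    (hxy : (H n).eval x = (H n).eval y) :
    x = y := by
  have hn : (0 : ℝ) < n := by exact_mod_cast hpos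
  obtain ⟨P, hP⟩ : ∃ P : Polynomial ℝ, P = Polynomial.C (2 * n : ℝ) * H n ^ 2
    + Polynomial.derivative (H n) ^ 2 := ⟨_, rfl⟩
  have hd : Polynomial.derivative P
      = Polynomial.C 4 * Polynomial.X * Polynomial.derivative (H n) ^ 2 := by
    rw [hP]
    simp only [Polynomial.derivative_add, Polynomial.derivative_mul, Polynomial.derivative_C,
      pow_two, H_ode]
    simp only [map_mul, map_ofNat, map_natCast]
    ring
  have hmono : MonotoneOn (fun t => P.eval t) (Set.Ici 0) := by
    apply monotoneOn_of_deriv_nonneg (convex_Ici 0) P.continuous.continuousOn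
      P.differentiable.differentiableOn
    intro t ht
    rw [interior_Ici] at ht
    have ht' : (0 : ℝ) < t := ht
    rw [Polynomial.deriv, hd]
    simp only [Polynomial.eval_mul, Polynomial.eval_C, Polynomial.eval_X, Polynomial.eval_pow]
    positivity
  have hlt : ∀ a b : ℝ, 0 ≤ a → a < b → P.eval a < P.eval b := by
    intro a b ha hab
    refine lt_of_le_of_ne (hmono ha (ha.trans hab.le) hab.le) fun he => ?_
    have hc : P = Polynomial.C (P.eval a) := by
      apply Polynomial.eq_of_infinite_eval_eq
      refine (Set.Icc_infinite hab).mono fun t ht => ?_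
      have h1 := hmono ha (ha.trans ht.1) ht.1
      have h2 := hmono (ha.trans ht.1) (ha.trans hab.le) ht.2
      simp only [Set.mem_setOf_eq, Polynomial.eval_C]
      simp only at h1 h2
      linarith
    have hd0 : Polynomial.derivative P = 0 := by rw [hc, Polynomial.derivative_C]
    rw [hd] at hd0
    have h0 : Polynomial.derivative (H n) = 0 := by
      have h4 : (Polynomial.C 4 * Polynomial.X : Polynomial ℝ) ≠ 0 :=
        mul_ne_zero (Polynomial.C_ne_zero.2 (by norm_num)) Polynomial.X_ne_zero
      exact pow_eq_zero_iff (two_ne_zero) |>.1 ((mul_eq_zero.1 hd0).resolve_left h4)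
    have h5 := H_ode n
    rw [h0] at h5
    simp only [Polynomial.derivative_zero, mul_zero, zero_sub] at h5
    rcases mul_eq_zero.1 (neg_eq_zero.1 h5.symm) with h6 | h6
    · have := Polynomial.C_eq_zero.1 h6
      linarith
    · exact H_ne n h6
  have heven : ∀ t, P.eval (-t) = P.eval t := by
    intro t
    obtain ⟨m, rfl⟩ : ∃ m, n = m + 1 := ⟨n - 1, by omega⟩
    rw [hP, H_der]
    simp only [Polynomial.eval_add, Polynomial.eval_mul, Polynomial.eval_C, Polynomial.eval_pow,
      H_neg, mul_pow, ← pow_mul, mul_comm _ 2]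
    simp [pow_mul]
  have habs : ∀ t, P.eval |t| = P.eval t := by
    intro t
    rcases abs_choice t with h | h <;> rw [h]
    exact heven t
  have hval : ∀ t, (Polynomial.derivative (H n)).eval t = 0 →
      P.eval t = 2 * n * (H n).eval t ^ 2 := by
    intro t ht
    rw [hP]
    simp [ht]
  have hPxy : P.eval |x| = P.eval |y| := by
    rw [habs, habs, hval x hx, hval y hy, hxy]
  have hab : |x| = |y| := by
    rcases lt_trichotomy |x| |y| with h | h | h
    · exact absurd hPxy (hlt _ _ (abs_nonneg _) h).ne
    · exact h
    · exact absurd hPxy (hlt _ _ (abs_nonneg _) h).ne'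
  rcases abs_eq_abs.1 hab with h | h
  · exact h
  · have h1 : (H n).eval x = - (H n).eval y := by
      rw [h, H_neg, hodd.neg_one_pow]; ring
    have h2 : (H n).eval y = 0 := by linarith
    have h3 : P.eval |y| = 0 := by rw [habs, hval y hy, h2]; simp
    have h4 : y = 0 := by
      by_contra hne
      have h5 := hlt 0 |y| le_rfl (abs_pos.2 hne)
      have h6 : 0 ≤ P.eval 0 := by
        rw [hP]
        simp only [Polynomial.eval_add, Polynomial.eval_mul, Polynomial.eval_C,
          Polynomial.eval_pow]
        positivity
      linarith
    rw [h, h4, neg_zero]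
end
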